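/- Fix a transportation cost t > 0 and let f : [0,1] → ℝ be a continuous, strictly positive density. For p ∈ [0,t] let μ(p) = 1/2 − p/(2t) and define firm B's profit Π_B(p) = ∫_{μ(p)}^{1} (p + t(2θ − 1)) f(θ) dθ. Then Π_B is strictly increasing on [0,t]: for all 0 ≤ p < p' ≤ t, Π_B(p) < Π_B(p'). -/

import Mathlib

open MeasureTheory intervalIntegral

/-- Firm B's equilibrium profit `Π_B(p) = ∫_{μ(p)}^1 (p + t(2θ-1)) f(θ) dθ`
is strictly increasing in firm A's uniform price `p` on `[0, t]`, where
`μ(p) = 1/2 - p/(2t)` and `f` is a continuous strictly positive density on `[0,1]`. -/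
theorem stmt_1 (t : ℝ) (ht : 0 < t) (f : ℝ → ℝ)
    (hf_cont : ContinuousOn f (Set.Icc 0 1))
    (hf_pos : ∀ θ ∈ Set.Icc (0 : ℝ) 1, 0 < f θ)
    (μ : ℝ → ℝ) (hμ : ∀ p, μ p = 1 / 2 - p / (2 * t))
    (ProfitB : ℝ → ℝ)
    (hProfitB : ∀ p, ProfitB p = ∫ θ in (μ p)..1, (p + t * (2 * θ - 1)) * f θ) :
    ∀ p p' : ℝ, 0 ≤ p → p < p' → p' ≤ t → ProfitB p < ProfitB p' := by
  intro p p' hp hpp hpt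
  have key : ∀ q, q = t * (1 - 2 * μ q) := by
    intro q
    rw [hμ q]
    field_simp
    ring
  have k1 := key p
  have k2 := key p'
  have h0 : 0 ≤ μ p' := by
    by_contra h
    nlinarith
  have h1 : μ p' < μ p := by
    by_contra h
    nlinarith
  have h2 : μ p < 1 := by
    by_contra h
    nlinarith
  have hc : ∀ q : ℝ, ContinuousOn (fun θ => (q + t * (2 * θ - 1)) * f θ) (Set.Icc 0 1) := by
    intro q
    exact ContinuousOn.mul (by fun_prop) hf_cont
  have hi : ∀ q a b : ℝ, 0 ≤ a → a ≤ b → b ≤ 1 →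
      IntervalIntegrable (fun θ => (q + t * (2 * θ - 1)) * f θ) volume a b := by
    intro q a b ha hab hb
    apply ContinuousOn.intervalIntegrable_of_Icc hab
    exact (hc q).mono (Set.Icc_subset_Icc ha hb)
  rw [hProfitB p, hProfitB p', ← integral_add_adjacent_intervals
    (hi p' (μ p') (μ p) h0 h1.le h2.le) (hi p' (μ p) 1 (by linarith) h2.le le_rfl)]
  have hA : 0 ≤ ∫ θ in (μ p')..(μ p), (p' + t * (2 * θ - 1)) * f θ := by
    apply integral_nonneg h1.le
    intro θ hθ
    have hf := hf_pos θ ⟨by linarith [hθ.1], by linarith [hθ.2]⟩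
    apply mul_nonneg _ hf.le
    nlinarith [hθ.1]
  have hB : ∫ θ in (μ p)..1, (p + t * (2 * θ - 1)) * f θ
      < ∫ θ in (μ p)..1, (p' + t * (2 * θ - 1)) * f θ := by
    have hlt : ∀ θ ∈ Set.Icc (μ p) 1, (p + t * (2 * θ - 1)) * f θ
        < (p' + t * (2 * θ - 1)) * f θ := by
      intro θ hθ
      have hf := hf_pos θ ⟨by linarith [hθ.1], hθ.2⟩
      exact mul_lt_mul_of_pos_right (by linarith) hf
    have hsub : Set.Icc (μ p) 1 ⊆ Set.Icc (0 : ℝ) 1 :=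
      Set.Icc_subset_Icc (by linarith) le_rfl
    exact integral_lt_integral_of_continuousOn_of_le_of_exists_lt h2
      ((hc p).mono hsub) ((hc p').mono hsub)
      (fun θ hθ => (hlt θ ⟨hθ.1.le, hθ.2⟩).le)
      ⟨1, ⟨h2.le, le_rfl⟩, hlt 1 ⟨h2.le, le_rfl⟩⟩
  linarith
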